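/- Let ρ > 0, C₀ > 0, and let P : ℝ → ℝ be an exponential polynomial of exponential degree δ < 2ρ. Set A(r) = C₀·e^{2ρr} + P(r), and suppose A is positive on [r₀, ∞) for some r₀ > 0. Define G(r) = (1/4)·(A'(r)/A(r))² + (1/2)·(A'/A)'(r) − ρ². Then there exist α > 0, M > 0 and R ≥ r₀ such that |G(r)| ≤ M·e^{−αr} for all r ≥ R; in particular, G is bounded on [r₀, ∞) and ∫_{r₀}^{∞} r·|G(r)| dr < +∞. -/

import Mathlib

open Filter Topology

/-- An *exponential polynomial* is a function of the form
`A r = ∑ i, (pᵢ(r) cos (βᵢ r) + qᵢ(r) sin (βᵢ r)) * exp (αᵢ r)`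
where `pᵢ, qᵢ` are real polynomials and `αᵢ, βᵢ ∈ ℝ`. -/
def IsExpPoly (A : ℝ → ℝ) : Prop :=
  ∃ (k : ℕ) (p q : Fin k → Polynomial ℝ) (α β : Fin k → ℝ),
    ∀ r, A r = ∑ i,
      ((p i).eval r * Real.cos (β i * r) + (q i).eval r * Real.sin (β i * r)) * Real.exp (α i * r)

/-- A function `P` has *exponential degree* `δ` if `P r * exp (-s*r) → 0` as `r → +∞` for every
`s > δ`, and this fails for every `s < δ`. -/
def HasExpDegree (P : ℝ → ℝ) (δ : ℝ) : Prop :=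
  (∀ s, δ < s → Tendsto (fun r => P r * Real.exp (-s * r)) atTop (𝓝 0)) ∧
  (∀ s, s < δ → ¬ Tendsto (fun r => P r * Real.exp (-s * r)) atTop (𝓝 0))

/-!
Why derivatives of an exponential polynomial `P` grow no faster than `P`: the translates of `P` span
a finite-dimensional space of functions. Such a space is closed under pointwise limits, so it
contains the limit `P'` of difference quotients, and every combination of translates of `P` inherits
the bound `P = O(exp (s * r))`. Hence the `k`-th derivative of `A` is
`(2 * ρ) ^ k * C₀ * exp (2 * ρ * r) + O(exp (s * r))` for `k ≤ 2` and some `s < 2 * ρ`. Since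
`G + ρ ^ 2 = A'' / (2 * A) - (A' / A) ^ 2 / 4`, and the right-hand side equals `ρ ^ 2` for the
pure exponential, `G` decays like `exp (-(2 * ρ - s) * r)`.
-/

open Asymptotics Real Set

section TranslateSpan

variable {G K : Type*}

/-- The space of functions spanned by the translates of `f`. When it is finite-dimensional it also
contains the derivatives of `f`, which thereby inherit growth bounds from `f`. -/
def translateSpan [Add G] [CommSemiring K] (f : G → K) : Submodule K (G → K) :=
  Submodule.span K (range fun h x => f (x + h))

lemma translate_mem_translateSpan [Add G] [CommSemiring K] (f : G → K) (h : G) :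
    (fun x => f (x + h)) ∈ translateSpan f :=
  Submodule.subset_span ⟨h, rfl⟩

lemma translateSpan_le_of_mem [AddSemigroup G] [CommSemiring K] {f g : G → K}
    (hg : g ∈ translateSpan f) : translateSpan g ≤ translateSpan f := by
  refine Submodule.span_le.2 ?_
  rintro _ ⟨h, rfl⟩
  let translate : (G → K) →ₗ[K] (G → K) := LinearMap.funLeft K K (· + h)
  suffices translateSpan f ≤ (translateSpan f).comap translate from this hg
  refine Submodule.span_le.2 ?_
  rintro _ ⟨t, rfl⟩
  change (fun x => f (x + h + t)) ∈ translateSpan f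
  simpa only [add_assoc] using translate_mem_translateSpan f (h + t)

variable [Add G] [CommRing K] [IsNoetherianRing K]

lemma translateSpan_fg_of_translate_mem {f : G → K} {W : Submodule K (G → K)} (hW : W.FG)
    (hf : ∀ h, (fun x => f (x + h)) ∈ W) : (translateSpan f).FG :=
  hW.of_le (Submodule.span_le.2 (range_subset_iff.2 hf))

variable (G K) in
/-- The algebra of representative functions on `G`: those whose translates span a finitely
generated space. For `G = K = ℝ` these include polynomials, sines, cosines and exponentials, hence
all exponential polynomials. -/
def representativeFunctions : Subalgebra K (G → K) where
  carrier := {f | (translateSpan f).FG}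
  add_mem' {f g} hf hg := translateSpan_fg_of_translate_mem (hf.sup hg) fun h =>
    Submodule.add_mem_sup (translate_mem_translateSpan f h) (translate_mem_translateSpan g h)
  mul_mem' {f g} hf hg := translateSpan_fg_of_translate_mem (hf.mul hg) fun h =>
    Submodule.mul_mem_mul (translate_mem_translateSpan f h) (translate_mem_translateSpan g h)
  algebraMap_mem' c :=
    translateSpan_fg_of_translate_mem (Submodule.fg_span_singleton (algebraMap K (G → K) c))
      fun _ => Submodule.mem_span_singleton_self _

lemma mem_representativeFunctions_of_translate_eq {f u v : G → K} (a b : G → K)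
    (hf : ∀ h x, f (x + h) = a h * u x + b h * v x) : f ∈ representativeFunctions G K :=
  translateSpan_fg_of_translate_mem (Submodule.fg_span (toFinite {u, v})) fun h =>
    Submodule.mem_span_pair.2 ⟨a h, b h, funext fun x => (hf h x).symm⟩

end TranslateSpan

section Differentiation

variable {𝕜 : Type*} [NontriviallyNormedField 𝕜] [CompleteSpace 𝕜] {f : 𝕜 → 𝕜}

lemma deriv_mem_translateSpan (hf : f ∈ representativeFunctions 𝕜 𝕜) (hd : Differentiable 𝕜 f) :
    deriv f ∈ translateSpan f := by
  have : FiniteDimensional 𝕜 (translateSpan f) := Module.Finite.iff_fg.2 hf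
  have slope_tendsto : Tendsto (fun e x => e⁻¹ • (f (x + e) - f x)) (𝓝[≠] 0) (𝓝 (deriv f)) :=
    tendsto_pi_nhds.2 fun x => (hd x).hasDerivAt.tendsto_slope_zero
  refine (translateSpan f).closed_of_finiteDimensional.mem_of_tendsto slope_tendsto
    (.of_forall fun e => ?_)
  have translates := (translateSpan f).sub_mem (translate_mem_translateSpan f e)
    (translate_mem_translateSpan f 0)
  simp only [add_zero] at translates
  exact (translateSpan f).smul_mem e⁻¹ translates

lemma iteratedDeriv_mem_translateSpan (hf : f ∈ representativeFunctions 𝕜 𝕜) (n : ℕ)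
    (hd : ContDiff 𝕜 n f) : iteratedDeriv n f ∈ translateSpan f := by
  induction n with
  | zero => simpa only [iteratedDeriv_zero, add_zero] using translate_mem_translateSpan f 0
  | succ n ih =>
    have le := translateSpan_le_of_mem (ih (hd.of_le (by exact_mod_cast n.le_succ)))
    rw [iteratedDeriv_succ]
    exact le (deriv_mem_translateSpan (Submodule.FG.of_le hf le)
      (hd.differentiable_iteratedDeriv n (by exact_mod_cast n.lt_succ_self)))

end Differentiation

lemma isBigO_exp_of_mem_translateSpan {𝕜 : Type*} [NormedField 𝕜] {f g : ℝ → 𝕜} {s : ℝ}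
    (hf : f =O[atTop] fun r => exp (s * r)) (hg : g ∈ translateSpan f) :
    g =O[atTop] fun r => exp (s * r) := by
  induction hg using Submodule.span_induction with
  | mem _ hx =>
    obtain ⟨t, rfl⟩ := hx
    calc (fun r => f (r + t))
      _ =O[atTop] fun r => exp (s * (r + t)) :=
          hf.comp_tendsto (tendsto_atTop_add_const_right _ t tendsto_id)
      _ = fun r => exp (s * t) * exp (s * r) := by
          funext r; rw [← exp_add]; ring_nf
      _ =O[atTop] fun r => exp (s * r) := isBigO_const_mul_self _ _ _
  | zero => exact isBigO_zero _ _
  | add _ _ _ _ hx hy => exact hx.add hy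
  | smul c _ _ hx => exact hx.const_smul_left c

namespace IsExpPoly

variable {P : ℝ → ℝ}

lemma mem_representativeFunctions (hP : IsExpPoly P) : P ∈ representativeFunctions ℝ ℝ := by
  obtain ⟨k, p, q, α, β, hP⟩ := hP
  have id_mem : (fun r : ℝ => r) ∈ representativeFunctions ℝ ℝ :=
    mem_representativeFunctions_of_translate_eq (u := id) (v := 1) 1 id (by simp)
  have poly_mem (p : Polynomial ℝ) : (fun r => p.eval r) ∈ representativeFunctions ℝ ℝ := by
    have := Algebra.adjoin_singleton_le id_mem (p.aeval_mem_adjoin_singleton ℝ _)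
    simpa [funext fun r => p.aeval_fn_apply (fun r : ℝ => r) r] using this
  have cos_mem (b : ℝ) : (fun r => cos (b * r)) ∈ representativeFunctions ℝ ℝ :=
    mem_representativeFunctions_of_translate_eq
      (u := fun r => cos (b * r)) (v := fun r => sin (b * r))
      (fun h => cos (b * h)) (fun h => -sin (b * h))
      fun h r => by rw [mul_add, cos_add]; ring
  have sin_mem (b : ℝ) : (fun r => sin (b * r)) ∈ representativeFunctions ℝ ℝ :=
    mem_representativeFunctions_of_translate_eq
      (u := fun r => cos (b * r)) (v := fun r => sin (b * r))
      (fun h => sin (b * h)) (fun h => cos (b * h))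
      fun h r => by rw [mul_add, sin_add]; ring
  have exp_mem (a : ℝ) : (fun r => exp (a * r)) ∈ representativeFunctions ℝ ℝ :=
    mem_representativeFunctions_of_translate_eq (u := fun r => exp (a * r)) (v := 0)
      (fun h => exp (a * h)) 0
      fun h r => by rw [mul_add, exp_add]; simp [mul_comm]
  convert sum_mem fun i (_ : i ∈ Finset.univ) =>
    mul_mem (add_mem (mul_mem (poly_mem (p i)) (cos_mem (β i)))
      (mul_mem (poly_mem (q i)) (sin_mem (β i)))) (exp_mem (α i))
  ext r
  simp [hP]

lemma contDiff (hP : IsExpPoly P) {n : WithTop ℕ∞} : ContDiff ℝ n P := by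
  obtain ⟨k, p, q, α, β, hP⟩ := hP
  have poly_contDiff (p : Polynomial ℝ) : ContDiff ℝ n fun r => p.eval r := by
    simpa only [Polynomial.coe_aeval_eq_eval] using p.contDiff_aeval (𝕜 := ℝ) n
  rw [funext hP]
  fun_prop

lemma iteratedDeriv_isBigO_exp (hP : IsExpPoly P) {s : ℝ}
    (hO : P =O[atTop] fun r => exp (s * r)) (n : ℕ) :
    iteratedDeriv n P =O[atTop] fun r => exp (s * r) :=
  isBigO_exp_of_mem_translateSpan hO
    (iteratedDeriv_mem_translateSpan hP.mem_representativeFunctions n hP.contDiff)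

end IsExpPoly

lemma HasExpDegree.isBigO_exp {P : ℝ → ℝ} {δ s : ℝ} (hP : HasExpDegree P δ) (hs : δ < s) :
    P =O[atTop] fun r => exp (s * r) := by
  have := ((hP.1 s hs).isBigO_one ℝ).mul (isBigO_refl (fun r => exp (s * r)) atTop)
  simpa [mul_assoc, ← exp_add] using this

section ExpAsymptotics

variable {f g : ℝ → ℝ} {a s C D : ℝ}

lemma isTheta_exp_of_sub_isBigO_exp (hC : C ≠ 0) (hs : s < a)
    (hf : (fun r => f r - C * exp (a * r)) =O[atTop] fun r => exp (s * r)) :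
    f =Θ[atTop] fun r => exp (a * r) := by
  have exp_isLittleO : (fun r => exp (s * r)) =o[atTop] fun r => C * exp (a * r) := by
    refine (isLittleO_exp_comp_exp_comp.2 ?_).const_mul_right hC
    simpa only [← sub_mul, id] using tendsto_id.const_mul_atTop (sub_pos.2 hs)
  have f_equiv : f ~[atTop] fun r => C * exp (a * r) := hf.trans_isLittleO exp_isLittleO
  exact f_equiv.isTheta.trans ((isTheta_const_mul_left hC).2 (isTheta_refl _ _))

lemma isBigO_div_sub_div_of_sub_isBigO_exp (hC : C ≠ 0) (hs : s < a)
    (hf : (fun r => f r - C * exp (a * r)) =O[atTop] fun r => exp (s * r))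
    (hg : (fun r => g r - D * exp (a * r)) =O[atTop] fun r => exp (s * r)) :
    (fun r => g r / f r - D / C) =O[atTop] fun r => exp (-(a - s) * r) := by
  have f_theta := isTheta_exp_of_sub_isBigO_exp hC hs hf
  have numerator := (hg.const_mul_left C).sub (hf.const_mul_left D)
  have quotient := (numerator.mul f_theta.inv.isBigO).const_mul_left C⁻¹
  refine quotient.congr' ?_ (.of_forall fun r => ?_)
  · filter_upwards [f_theta.eq_zero_iff] with r hr
    have : f r ≠ 0 := fun h => (exp_pos _).ne' (hr.1 h)
    field_simp
    ring
  · simp only [← exp_neg, ← exp_add]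
    ring_nf

end ExpAsymptotics

/-- The potential `(√A)'' / √A` of the Liouville normal form: substituting `v = √A * u` turns
`u'' + (A' / A) * u' = -μ * u` into `v'' = (liouvillePotential A - μ) * v`. -/
noncomputable def liouvillePotential (A : ℝ → ℝ) (r : ℝ) : ℝ :=
  1 / 4 * logDeriv A r ^ 2 + 1 / 2 * deriv (logDeriv A) r

section LiouvillePotential

variable {A : ℝ → ℝ}

lemma liouvillePotential_eq {r : ℝ} (hA : ContDiff ℝ 2 A) (hr : A r ≠ 0) :
    liouvillePotential A r =
      1 / 2 * (iteratedDeriv 2 A r / A r) - 1 / 4 * (iteratedDeriv 1 A r / A r) ^ 2 := by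
  have deriv_logDeriv : deriv (logDeriv A) r =
      (deriv (deriv A) r * A r - deriv A r * deriv A r) / A r ^ 2 :=
    deriv_div (hA.differentiable_deriv_two r) (hA.differentiable two_ne_zero r) hr
  rw [liouvillePotential, logDeriv_apply, deriv_logDeriv, iteratedDeriv_one, iteratedDeriv_succ,
    iteratedDeriv_one]
  field_simp
  ring

lemma continuousOn_liouvillePotential {S : Set ℝ} (hA : ContDiff ℝ 2 A) (hS : ∀ r ∈ S, A r ≠ 0) :
    ContinuousOn (liouvillePotential A) S := by
  have continuous_one := (hA.continuous_iteratedDeriv 1 one_le_two).continuousOn (s := S)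
  have continuous_two := (hA.continuous_iteratedDeriv 2 le_rfl).continuousOn (s := S)
  have continuous_zero := hA.continuous.continuousOn (s := S)
  refine ContinuousOn.congr ?_ fun r hr => liouvillePotential_eq hA (hS r hr)
  fun_prop (disch := assumption)

lemma isBigO_liouvillePotential_sub {a s C : ℝ} (hA : ContDiff ℝ 2 A) (hC : C ≠ 0) (hs : s < a)
    (hO : ∀ k ≤ 2, (fun r => iteratedDeriv k A r - a ^ k * C * exp (a * r)) =O[atTop]
      fun r => exp (s * r)) :
    (fun r => liouvillePotential A r - a ^ 2 / 4) =O[atTop] fun r => exp (-(a - s) * r) := by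
  have hA_exp : (fun r => A r - C * exp (a * r)) =O[atTop] fun r => exp (s * r) := by
    simpa using hO 0 (Nat.zero_le 2)
  have ratio (k : ℕ) (hk : k ≤ 2) : (fun r => iteratedDeriv k A r / A r - a ^ k) =O[atTop]
      fun r => exp (-(a - s) * r) := by
    simpa only [mul_div_cancel_right₀ _ hC] using
      isBigO_div_sub_div_of_sub_isBigO_exp hC hs hA_exp (hO k hk)
  have decay_isBigO_one : (fun r => exp (-(a - s) * r)) =O[atTop] fun _ => (1 : ℝ) :=
    (tendsto_exp_atBot.comp
      (tendsto_id.const_mul_atTop_of_neg (neg_lt_zero.2 (sub_pos.2 hs)))).isBigO_one ℝ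
  have sum_isBigO_one : (fun r => iteratedDeriv 1 A r / A r - a ^ 1 + 2 * a) =O[atTop]
      fun _ => (1 : ℝ) :=
    ((ratio 1 one_le_two).trans decay_isBigO_one).add (isBigO_const_const _ one_ne_zero _)
  have square := (ratio 1 one_le_two).mul sum_isBigO_one
  simp only [mul_one] at square
  refine (((ratio 2 le_rfl).const_mul_left (1 / 2)).sub (square.const_mul_left (1 / 4))).congr' ?_
    .rfl
  filter_upwards [(isTheta_exp_of_sub_isBigO_exp hC hs hA_exp).eq_zero_iff] with r hr
  rw [liouvillePotential_eq hA fun h => (exp_pos _).ne' (hr.1 h)]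
  ring

end LiouvillePotential

lemma iteratedDeriv_const_mul_exp_add {P : ℝ → ℝ} {n : ℕ} (hP : ContDiff ℝ n P) (a C r : ℝ) :
    iteratedDeriv n (fun r => C * exp (a * r) + P r) r =
      a ^ n * C * exp (a * r) + iteratedDeriv n P r := by
  have exp_contDiff : ContDiff ℝ n fun r => C * exp (a * r) := by fun_prop
  rw [iteratedDeriv_fun_add exp_contDiff.contDiffAt hP.contDiffAt, iteratedDeriv_const_mul_field,
    iteratedDeriv_exp_const_mul]
  ring

lemma isBigO_principal_Ici_of_continuousOn {X E F : Type*} [TopologicalSpace X] [LinearOrder X]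
    [CompactIccSpace X] [SeminormedAddCommGroup E] [NormedAddCommGroup F] {f : X → E}
    {g : X → F} {a : X}
    (hf : ContinuousOn f (Ici a)) (hg : ContinuousOn g (Ici a)) (hg0 : ∀ x ∈ Ici a, g x ≠ 0)
    (hO : f =O[atTop] g) : f =O[𝓟 (Ici a)] g := by
  have : Nonempty X := ⟨a⟩
  obtain ⟨c, hc⟩ := hO.bound
  obtain ⟨R, hR⟩ := eventually_atTop.1 hc
  have near : f =O[𝓟 (Icc a R)] g :=
    ((hf.mono Icc_subset_Ici_self).isBigO_principal isCompact_Icc (c := (1 : ℝ)) (by simp)).trans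
      ((hg.mono Icc_subset_Ici_self).isBigO_rev_principal isCompact_Icc
        (fun x hx => hg0 x hx.1) 1)
  have far : f =O[𝓟 (Ici R)] g := isBigO_principal.2 ⟨c, hR⟩
  refine (near.sup far).mono ?_
  rw [sup_principal, principal_mono]
  exact fun x hx => (le_total x R).imp (⟨hx, ·⟩) id

section ExponentialDecay

variable {f : ℝ → ℝ} {a b : ℝ}

lemma exists_abs_le_mul_exp_of_isBigO (hf : ContinuousOn f (Ici a))
    (hO : f =O[atTop] fun r => exp (-b * r)) :
    ∃ M > 0, ∀ r ≥ a, |f r| ≤ M * exp (-b * r) := by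
  have global := isBigO_principal_Ici_of_continuousOn hf (by fun_prop)
    (fun _ _ => (exp_pos _).ne') hO
  obtain ⟨M, hM, hbound⟩ := global.exists_pos
  exact ⟨M, hM, by simpa [isBigOWith_principal] using hbound⟩

lemma integrableOn_mul_abs_of_isBigO_exp (hb : 0 < b) (hf : ContinuousOn f (Ici a))
    (hO : f =O[atTop] fun r => exp (-b * r)) :
    MeasureTheory.IntegrableOn (fun r => r * |f r|) (Ici a) := by
  have id_isBigO : (fun r : ℝ => r) =O[atTop] fun r => exp (b / 2 * r) := by
    simpa only [pow_one] using (isLittleO_pow_exp_pos_mul_atTop 1 (half_pos hb)).isBigO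
  refine integrableOn_Ici_iff_integrableOn_Ioi (by finiteness) |>.2 <|
    integrable_of_isBigO_exp_neg (half_pos hb) (continuousOn_id.mul hf.abs) ?_
  refine (id_isBigO.mul hO.abs_left).congr_right fun r => ?_
  rw [← exp_add]
  ring_nf

end ExponentialDecay

theorem condition_H4_holds_general {ρ C₀ s r₀ : ℝ} (hC₀ : C₀ ≠ 0) (hs : s < 2 * ρ)
    {P : ℝ → ℝ} (hP : ContDiff ℝ 2 P)
    (hPO : ∀ k ≤ 2, iteratedDeriv k P =O[atTop] fun r => exp (s * r))
    {A : ℝ → ℝ} (hA : ∀ r, A r = C₀ * exp (2 * ρ * r) + P r) (hA0 : ∀ r ≥ r₀, A r ≠ 0)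
    {G : ℝ → ℝ} (hG : ∀ r, G r = (1 / 4) * (deriv A r / A r) ^ 2 +
      (1 / 2) * deriv (fun t => deriv A t / A t) r - ρ ^ 2) :
    (∃ α > (0 : ℝ), ∃ M > (0 : ℝ), ∃ R ≥ r₀, ∀ r ≥ R, |G r| ≤ M * exp (-α * r)) ∧
    (∃ M : ℝ, ∀ r ≥ r₀, |G r| ≤ M) ∧
    MeasureTheory.IntegrableOn (fun r => r * |G r|) (Ici r₀) := by
  obtain rfl : A = fun r => C₀ * exp (2 * ρ * r) + P r := funext hA
  obtain rfl : G = fun r => liouvillePotential _ r - ρ ^ 2 := funext hG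
  have hA_contDiff : ContDiff ℝ 2 fun r => C₀ * exp (2 * ρ * r) + P r := by fun_prop
  have hG_cont := (continuousOn_liouvillePotential hA_contDiff hA0).sub
    (continuousOn_const (c := ρ ^ 2))
  have hG_decay : (fun r => liouvillePotential (fun r => C₀ * exp (2 * ρ * r) + P r) r - ρ ^ 2)
      =O[atTop] fun r => exp (-(2 * ρ - s) * r) := by
    convert isBigO_liouvillePotential_sub hA_contDiff hC₀ hs fun k hk => ?_ using 3
    · ring
    · simpa only [iteratedDeriv_const_mul_exp_add (hP.of_le (by exact_mod_cast hk)),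
        add_sub_cancel_left] using hPO k hk
  have hα := sub_pos.2 hs
  obtain ⟨M, hM, hbound⟩ := exists_abs_le_mul_exp_of_isBigO hG_cont hG_decay
  refine ⟨⟨_, hα, M, hM, r₀, le_rfl, hbound⟩, ⟨M * exp (-(2 * ρ - s) * r₀), fun r hr => ?_⟩,
    integrableOn_mul_abs_of_isBigO_exp hα hG_cont hG_decay⟩
  refine (hbound r hr).trans ?_
  gcongr M * exp ?_
  exact mul_le_mul_of_nonpos_left hr (neg_nonpos.2 hα.le)

/-- Let `ρ > 0`, `C₀ > 0`, and let `P` be an exponential polynomial of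
exponential degree `δ < 2ρ`. Set `A r = C₀ * exp (2ρr) + P r` and suppose `A` is positive on
`[r₀, ∞)` for some `r₀ > 0`. Define
`G r = (1/4) * (A' r / A r)² + (1/2) * (A'/A)' r - ρ²`. Then there exist `α > 0`, `M > 0` and
`R ≥ r₀` with `|G r| ≤ M * exp (-αr)` for all `r ≥ R`; in particular `G` is bounded on
`[r₀, ∞)` and `∫_{r₀}^∞ r * |G r| dr < ∞`. -/
theorem condition_H4_holds
    (ρ C₀ : ℝ) (hρ : 0 < ρ) (hC₀ : 0 < C₀)
    (P : ℝ → ℝ) (δ : ℝ) (hP : IsExpPoly P) (hdeg : HasExpDegree P δ) (hδ : δ < 2 * ρ)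
    (A : ℝ → ℝ) (hA : ∀ r, A r = C₀ * Real.exp (2 * ρ * r) + P r)
    (r₀ : ℝ) (hr₀ : 0 < r₀) (hpos : ∀ r ≥ r₀, 0 < A r)
    (G : ℝ → ℝ)
    (hG : ∀ r, G r = (1 / 4) * (deriv A r / A r) ^ 2 +
      (1 / 2) * deriv (fun s => deriv A s / A s) r - ρ ^ 2) :
    (∃ α > (0 : ℝ), ∃ M > (0 : ℝ), ∃ R ≥ r₀, ∀ r ≥ R, |G r| ≤ M * Real.exp (-α * r)) ∧
    (∃ M : ℝ, ∀ r ≥ r₀, |G r| ≤ M) ∧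
    MeasureTheory.IntegrableOn (fun r => r * |G r|) (Set.Ici r₀) := by
  obtain ⟨s, hδs, hs⟩ := exists_between hδ
  exact condition_H4_holds_general hC₀.ne' hs hP.contDiff
    (fun k _ => hP.iteratedDeriv_isBigO_exp (hdeg.isBigO_exp hδs) k) hA
    (fun r hr => (hpos r hr).ne') hG
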